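/- Let X be a geometric tree with at least one branch point (i.e., not homeomorphic to an interval) and T a generic cellular merge tree with n leaves. Then the constrained configuration space Conf(X,T) is nonempty and path-connected. -/

import Mathlib

open scoped Classical

noncomputable section

instance dartTop {V : Type*} (G : SimpleGraph V) : TopologicalSpace G.Dart := ⊥

/-- Gluing relation for the geometric realization of a graph: one copy of `[0,1]` per
oriented edge, opposite orientations identified by `t ↦ 1-t`, and starting points of edges
with the same initial vertex identified. -/
def treeRel {V : Type*} (G : SimpleGraph V) :
    (G.Dart × ↥(Set.Icc (0:ℝ) 1)) → (G.Dart × ↥(Set.Icc (0:ℝ) 1)) → Prop :=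
  fun p q =>
    (p.1 = q.1.symm ∧ (p.2 : ℝ) = 1 - (q.2 : ℝ)) ∨
    (p.1.toProd.1 = q.1.toProd.1 ∧ (p.2 : ℝ) = 0 ∧ (q.2 : ℝ) = 0)

/-- The geometric realization of a graph. -/
def TreeSpace {V : Type*} (G : SimpleGraph V) := Quot (treeRel G)

instance {V : Type*} (G : SimpleGraph V) : TopologicalSpace (TreeSpace G) :=
  instTopologicalSpaceQuot
/-- Combinatorial data for a cellular merge tree: a finite rooted tree with a real value at
each node, strictly increasing towards the root; the root carries an infinite upward ray. -/
structure MergeTreeData where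
  n : ℕ
  parent : Fin n → Fin n
  root : Fin n
  hroot : parent root = root
  hreach : ∀ v, ∃ k, parent^[k] v = root
  val : Fin n → ℝ
  hval : ∀ v, v ≠ root → val v < val (parent v)

namespace MergeTreeData

variable (d : MergeTreeData)

/-- Points of the edge attached below each node (for the root: the infinite upward ray). -/
def Carrier : Set (Fin d.n × ℝ) :=
  {p | d.val p.1 ≤ p.2 ∧ (p.1 ≠ d.root → p.2 ≤ d.val (d.parent p.1))}

/-- Glue the top of each edge to the bottom of the parent's edge. -/
def glueRel : ↥d.Carrier → ↥d.Carrier → Prop := fun a b =>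
  a.1.2 = b.1.2 ∧ d.parent a.1.1 = b.1.1 ∧ a.1.2 = d.val (d.parent a.1.1)

/-- The geometric realization of the cellular merge tree `d`. -/
def Space := Quot d.glueRel

instance : TopologicalSpace d.Space := instTopologicalSpaceQuot

/-- The gauge of the canonical cellular merge tree. -/
def gauge : d.Space → ℝ := Quot.lift (fun a => a.1.2) (fun _ _ h => h.1)

/-- `v` is a descendant of `w` (possibly `v = w`). -/
def Desc (v w : Fin d.n) : Prop := ∃ k, d.parent^[k] v = w

def IsLeafNode (v : Fin d.n) : Prop := ∀ w, d.parent w = v → w = v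

def IsBranchNode (v : Fin d.n) : Prop := 2 ≤ Nat.card {w : Fin d.n // d.parent w = v ∧ w ≠ v}

/-- Generic: binary (each node has zero or two children) and leaves take distinct values. -/
def Generic : Prop :=
  (∀ v, Nat.card {w : Fin d.n // d.parent w = v ∧ w ≠ v} = 0 ∨
        Nat.card {w : Fin d.n // d.parent w = v ∧ w ≠ v} = 2) ∧
  ∀ v w, d.IsLeafNode v → d.IsLeafNode w → v ≠ w → d.val v ≠ d.val w

/-- `a` is the least common ancestor of `u` and `w`. -/
def IsLCA (u w a : Fin d.n) : Prop :=
  d.Desc u a ∧ d.Desc w a ∧ ∀ b, d.Desc u b → d.Desc w b → d.Desc a b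

/-- The type of leaves. -/
def Leaf := {v : Fin d.n // d.IsLeafNode v}

end MergeTreeData

/-- Isomorphism of gauged spaces: a homeomorphism commuting with the gauges. -/
def GaugedIso {A B : Type*} [TopologicalSpace A] [TopologicalSpace B]
    (πA : A → ℝ) (πB : B → ℝ) : Prop :=
  ∃ e : A ≃ₜ B, ∀ x, πB (e x) = πA x

/-- A gauged space is a cellular merge tree if it is isomorphic (as a gauged space) to the
realization of some combinatorial merge tree data. -/
def IsCellularMergeTree {A : Type*} [TopologicalSpace A] (π : A → ℝ) : Prop :=
  ∃ d : MergeTreeData, GaugedIso d.gauge π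
/-- The convex hull of a subset of a tree: the intersection of all closed connected
(preconnected) supersets. -/
def ConvH {X : Type*} [TopologicalSpace X] (A : Set X) : Set X :=
  ⋂₀ {C : Set X | A ⊆ C ∧ IsClosed C ∧ IsPreconnected C}

/-- The hull `Conv(v)` associated to a node `v`: convex hull of the union of the sets
indexed by the leaves descendant from `v`. -/
def hullOf {X : Type*} [TopologicalSpace X] (d : MergeTreeData)
    (F : d.Leaf → Set X) (v : Fin d.n) : Set X :=
  ConvH (⋃ l : d.Leaf, if d.Desc l.1 v then F l else ∅)

/-- The hull-compatibility constraint defining the constrained configuration spaces: hulls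
of incomparable nodes are disjoint. -/
def HullCond {X : Type*} [TopologicalSpace X] (d : MergeTreeData) (F : d.Leaf → Set X) : Prop :=
  ∀ v w : Fin d.n, (hullOf d F v ∩ hullOf d F w).Nonempty → d.Desc v w ∨ d.Desc w v

/-- Membership in the constrained point configuration space `Conf(X,T)`. -/
def ConfCond {X : Type*} [TopologicalSpace X] (d : MergeTreeData) (x : d.Leaf → X) : Prop :=
  Function.Injective x ∧ HullCond d (fun l => ({x l} : Set X))

/-!
Induct on the set of leaves, removing one leaf `l₂` of a cherry `{l₁, l₂}` at a time. In a
compatible configuration the point `x l₂` can slide along the segment to `x l₁` until it is as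
close to it as we like, and once it is close enough the only constraint left on it is
`x l₂ ≠ x l₁`. Away from end points of the tree, a nearby pair of distinct points can follow any
small motion of the configuration of the other points. Since those form a path-connected space
by induction, every configuration can be moved until `x l₁` is a branch point. There the nearby
point `x l₂` can pass from any side of `x l₁` to any other, because `x l₁` can step aside into a
third branch.
-/

open Set Topology Function

section ConvexHull

variable {X : Type*} [TopologicalSpace X] {A B C : Set X} {a b y : X}

theorem subset_convH (A : Set X) : A ⊆ ConvH A := fun _ hx _ hC => hC.1 hx

theorem isClosed_convH (A : Set X) : IsClosed (ConvH A) := isClosed_sInter fun _ hC => hC.2.1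

theorem convH_subset (hAC : A ⊆ C) (hC : IsClosed C) (hC' : IsPreconnected C) : ConvH A ⊆ C :=
  fun _ hx => hx C ⟨hAC, hC, hC'⟩

theorem convH_subset_convH (h : A ⊆ ConvH B) : ConvH A ⊆ ConvH B :=
  fun _ hx C hC => hx C ⟨h.trans (convH_subset hC.1 hC.2.1 hC.2.2), hC.2⟩

theorem convH_mono (h : A ⊆ B) : ConvH A ⊆ ConvH B :=
  convH_subset_convH (h.trans (subset_convH B))

theorem convH_empty : ConvH (∅ : Set X) = ∅ :=
  subset_empty_iff.1 (convH_subset Subset.rfl isClosed_empty isPreconnected_empty)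

theorem convH_singleton [T1Space X] (a : X) : ConvH {a} = {a} :=
  (convH_subset Subset.rfl isClosed_singleton isPreconnected_singleton).antisymm
    (subset_convH _)

/-- The segment between two points of a tree-like space: their convex hull. -/
def hullSegment (a b : X) : Set X := ConvH {a, b}

theorem left_mem_hullSegment (a b : X) : a ∈ hullSegment a b := subset_convH _ (by simp)

theorem right_mem_hullSegment (a b : X) : b ∈ hullSegment a b := subset_convH _ (by simp)

theorem hullSegment_comm (a b : X) : hullSegment a b = hullSegment b a := by
  rw [hullSegment, pair_comm, hullSegment]

theorem hullSegment_subset (ha : a ∈ C) (hb : b ∈ C) (hC : IsClosed C)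
    (hC' : IsPreconnected C) : hullSegment a b ⊆ C :=
  convH_subset (pair_subset ha hb) hC hC'

theorem hullSegment_subset_convH (ha : a ∈ ConvH A) (hb : b ∈ ConvH A) :
    hullSegment a b ⊆ ConvH A :=
  convH_subset_convH (pair_subset ha hb)

theorem hullSegment_subset_hullSegment_left (hy : y ∈ hullSegment a b) :
    hullSegment a y ⊆ hullSegment a b :=
  hullSegment_subset_convH (left_mem_hullSegment a b) hy

theorem hullSegment_subset_of_joinedIn [T2Space X] (h : JoinedIn A a b) :
    hullSegment a b ⊆ A := by
  obtain ⟨γ, hγ⟩ := h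
  calc hullSegment a b ⊆ range γ := hullSegment_subset ⟨0, γ.source⟩ ⟨1, γ.target⟩
        (isCompact_range γ.continuous).isClosed (isPreconnected_range γ.continuous)
    _ ⊆ A := range_subset_iff.2 hγ

/-- Convexity of a set with respect to the segments `hullSegment`. -/
def SegConvex (P : Set X) : Prop := ∀ a ∈ P, ∀ b ∈ P, hullSegment a b ⊆ P

theorem SegConvex.inter {P Q : Set X} (hP : SegConvex P) (hQ : SegConvex Q) :
    SegConvex (P ∩ Q) :=
  fun a ha b hb => subset_inter (hP a ha.1 b hb.1) (hQ a ha.2 b hb.2)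

variable (X) in
/-- The points of a tree-like space which are not end points: those lying strictly between two
other points. -/
def innerPoints : Set X := {p | ∃ a b, a ≠ p ∧ b ≠ p ∧ p ∈ hullSegment a b}

theorem segConvex_innerPoints : SegConvex (innerPoints X) := by
  intro a ha b hb p hp
  by_cases hap : a = p
  · exact hap ▸ ha
  by_cases hbp : b = p
  · exact hbp ▸ hb
  exact ⟨a, b, hap, hbp, hp⟩

/-- A branch point of a tree-like space: a point lying strictly between any two of some three
points, so that its complement has at least three components. -/
def IsBranchPoint (b : X) : Prop :=
  ∃ a₁ a₂ a₃ : X, a₁ ≠ b ∧ a₂ ≠ b ∧ a₃ ≠ b ∧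
    b ∈ hullSegment a₁ a₂ ∧ b ∈ hullSegment a₁ a₃ ∧ b ∈ hullSegment a₂ a₃

theorem IsBranchPoint.mem_innerPoints {b : X} (hb : IsBranchPoint b) : b ∈ innerPoints X := by
  obtain ⟨a₁, a₂, -, h₁, h₂, -, h₁₂, -⟩ := hb
  exact ⟨a₁, a₂, h₁, h₂, h₁₂⟩

end ConvexHull

/-- Dendritic spaces, the abstract trees on which the argument runs: locally path-connected
Hausdorff spaces in which the convex hull of two points contains a path between them and
betweenness is antisymmetric. -/
class IsDendritic (X : Type*) [TopologicalSpace X] : Prop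
    extends T2Space X, LocallyPathConnectedSpace X where
  joinedIn_hullSegment (a b : X) : JoinedIn (hullSegment a b) a b
  eq_of_mem_of_mem {a b y : X} (hy : y ∈ hullSegment a b) (ha : a ∈ hullSegment y b) : a = y

section Dendritic

open IsDendritic

variable {X : Type*} [TopologicalSpace X] [IsDendritic X] {A C : Set X} {a b p w x y z : X}

theorem exists_path_range_eq_hullSegment (a b : X) : ∃ γ : Path a b, range γ = hullSegment a b := by
  obtain ⟨γ, hγ⟩ := joinedIn_hullSegment a b
  have hγ' : range γ ⊆ hullSegment a b := range_subset_iff.2 hγ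
  exact ⟨γ, hγ'.antisymm (hullSegment_subset_of_joinedIn ⟨γ, mem_range_self⟩)⟩

theorem isCompact_hullSegment (a b : X) : IsCompact (hullSegment a b) := by
  obtain ⟨γ, hγ⟩ := exists_path_range_eq_hullSegment a b
  exact hγ ▸ isCompact_range γ.continuous

theorem isPreconnected_hullSegment (a b : X) : IsPreconnected (hullSegment a b) := by
  obtain ⟨γ, hγ⟩ := exists_path_range_eq_hullSegment a b
  exact hγ ▸ isPreconnected_range γ.continuous

theorem segConvex_of_isPreconnected (hC : IsPreconnected C) : SegConvex C := by
  intro a ha b hb p hp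
  by_contra hpC
  have hCp : C ⊆ connectedComponentIn {p}ᶜ a :=
    hC.subset_connectedComponentIn ha (subset_compl_singleton_iff.2 hpC)
  have hconn : IsConnected (connectedComponentIn {p}ᶜ a) :=
    ⟨⟨a, hCp ha⟩, isPreconnected_connectedComponentIn⟩
  have hpath : IsPathConnected (connectedComponentIn {p}ᶜ a) :=
    isOpen_compl_singleton.connectedComponentIn.isConnected_iff_isPathConnected.1 hconn
  exact connectedComponentIn_subset _ _
    (hullSegment_subset_of_joinedIn (hpath.joinedIn a (hCp ha) b (hCp hb)) hp) rfl

theorem isPreconnected_biUnion_hullSegment (a : X) (A : Set X) :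
    IsPreconnected (⋃ x ∈ A, hullSegment a x) := by
  rw [biUnion_eq_iUnion]
  exact isPreconnected_iUnion ⟨a, mem_iInter.2 fun x => left_mem_hullSegment a x⟩
    fun x => isPreconnected_hullSegment a x

theorem convH_eq_biUnion (hA : A.Finite) (ha : a ∈ A) : ConvH A = ⋃ x ∈ A, hullSegment a x := by
  refine (convH_subset ?_ ?_ (isPreconnected_biUnion_hullSegment a A)).antisymm ?_
  · exact fun x hx => mem_biUnion hx (right_mem_hullSegment a x)
  · exact hA.isClosed_biUnion fun x _ => isClosed_convH _
  · exact iUnion₂_subset fun x hx =>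
      hullSegment_subset_convH (subset_convH A ha) (subset_convH A hx)

theorem isCompact_convH (hA : A.Finite) : IsCompact (ConvH A) := by
  rcases A.eq_empty_or_nonempty with rfl | ⟨a, ha⟩
  · rw [convH_empty]; exact isCompact_empty
  · exact convH_eq_biUnion hA ha ▸ hA.isCompact_biUnion fun x _ => isCompact_hullSegment a x

theorem isPreconnected_convH (hA : A.Finite) : IsPreconnected (ConvH A) := by
  rcases A.eq_empty_or_nonempty with rfl | ⟨a, ha⟩
  · rw [convH_empty]; exact isPreconnected_empty
  · exact convH_eq_biUnion hA ha ▸ isPreconnected_biUnion_hullSegment a A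

theorem convH_subset_of_finite (hA : A.Finite) (hAC : A ⊆ C) (hC : IsPreconnected C) :
    ConvH A ⊆ C := by
  rcases A.eq_empty_or_nonempty with rfl | ⟨a, ha⟩
  · rw [convH_empty]; exact empty_subset C
  · rw [convH_eq_biUnion hA ha]
    exact iUnion₂_subset fun x hx => segConvex_of_isPreconnected hC a (hAC ha) x (hAC hx)

theorem hullSegment_subset_union (a b c : X) :
    hullSegment a b ⊆ hullSegment a c ∪ hullSegment c b :=
  segConvex_of_isPreconnected
    ((isPreconnected_hullSegment a c).union c (right_mem_hullSegment a c)
      (left_mem_hullSegment c b) (isPreconnected_hullSegment c b))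
    a (Or.inl (left_mem_hullSegment a c)) b (Or.inr (right_mem_hullSegment c b))

theorem eq_of_mem_of_mem_right (hy : y ∈ hullSegment a b) (hb : b ∈ hullSegment a y) : b = y :=
  eq_of_mem_of_mem (hullSegment_comm a b ▸ hy) (hullSegment_comm a y ▸ hb)

theorem exists_mem_hullSegment_mem_nhds (hpy : p ≠ y) {U : Set X} (hU : U ∈ 𝓝 p) :
    ∃ z ∈ hullSegment p y, z ∈ U ∧ z ≠ p ∧ z ∈ innerPoints X := by
  obtain ⟨O, hOU, hO, hpO⟩ := mem_nhds_iff.1 hU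
  have hcover : hullSegment p y ⊆ (O \ {y}) ∪ {p}ᶜ := by
    intro z _
    by_cases hzp : z = p
    · exact Or.inl (hzp ▸ ⟨hpO, hpy⟩)
    · exact Or.inr hzp
  obtain ⟨z, hz, ⟨hzO, hzy⟩, hzp⟩ := isPreconnected_hullSegment p y (O \ {y}) {p}ᶜ
    (hO.sdiff isClosed_singleton) isOpen_compl_singleton hcover
    ⟨p, left_mem_hullSegment p y, hpO, hpy⟩ ⟨y, right_mem_hullSegment p y, hpy.symm⟩
  exact ⟨z, hz, hOU hzO, hzp, p, y, Ne.symm hzp, Ne.symm hzy, hz⟩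

theorem dense_innerPoints [Nontrivial X] : Dense (innerPoints X) := by
  intro p
  obtain ⟨y, hy⟩ := exists_ne p
  refine mem_closure_iff_nhds.2 fun U hU => ?_
  obtain ⟨z, -, hzU, -, hz⟩ := exists_mem_hullSegment_mem_nhds hy.symm hU
  exact ⟨z, hzU, hz⟩

theorem mem_hullSegment_shorten (hp : p ∈ hullSegment w a) (hz : z ∈ hullSegment p a)
    (hzp : z ≠ p) : p ∈ hullSegment w z :=
  (hullSegment_subset_union w a z hp).resolve_right
    fun hp' => hzp (eq_of_mem_of_mem hz hp').symm

theorem exists_mem_hullSegment_beyond (hp : p ∈ innerPoints X) (w : X) {U : Set X}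
    (hU : U ∈ 𝓝 p) : ∃ z ∈ U, z ≠ p ∧ z ∈ innerPoints X ∧ p ∈ hullSegment w z := by
  obtain ⟨a, hap, ha⟩ : ∃ a, a ≠ p ∧ p ∈ hullSegment w a := by
    obtain ⟨a, b, ha, hb, hab⟩ := hp
    rcases hullSegment_subset_union a b w hab with h | h
    · exact ⟨a, ha, hullSegment_comm a w ▸ h⟩
    · exact ⟨b, hb, h⟩
  obtain ⟨z, hz, hzU, hzp, hzi⟩ := exists_mem_hullSegment_mem_nhds hap.symm hU
  exact ⟨z, hzU, hzp, hzi, mem_hullSegment_shorten ha hz hzp⟩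

theorem IsBranchPoint.exists_mem_hullSegment_beyond_two (hb : IsBranchPoint b) (x y : X)
    {U : Set X} (hU : U ∈ 𝓝 b) :
    ∃ z ∈ U, z ≠ b ∧ z ∈ innerPoints X ∧ b ∈ hullSegment x z ∧ b ∈ hullSegment y z := by
  obtain ⟨a, hab, hxa, hya⟩ : ∃ a, a ≠ b ∧ b ∈ hullSegment x a ∧ b ∈ hullSegment y a := by
    obtain ⟨a₁, a₂, a₃, h₁, h₂, h₃, h₁₂, h₁₃, h₂₃⟩ := hb
    -- Seen from `w`, at least two of the three points `aᵢ` lie beyond `b`.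
    have beyond_or : ∀ w u v : X, b ∈ hullSegment u v → b ∈ hullSegment w u ∨ b ∈ hullSegment w v :=
      fun w u v h => (hullSegment_subset_union u v w h).imp_left (hullSegment_comm u w ▸ ·)
    have hx₁₂ := beyond_or x _ _ h₁₂
    have hx₁₃ := beyond_or x _ _ h₁₃
    have hx₂₃ := beyond_or x _ _ h₂₃
    have hy₁₂ := beyond_or y _ _ h₁₂
    have hy₁₃ := beyond_or y _ _ h₁₃
    have hy₂₃ := beyond_or y _ _ h₂₃
    have pigeonhole : (b ∈ hullSegment x a₁ ∧ b ∈ hullSegment y a₁) ∨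
        (b ∈ hullSegment x a₂ ∧ b ∈ hullSegment y a₂) ∨
        (b ∈ hullSegment x a₃ ∧ b ∈ hullSegment y a₃) := by tauto
    rcases pigeonhole with h | h | h
    exacts [⟨a₁, h₁, h⟩, ⟨a₂, h₂, h⟩, ⟨a₃, h₃, h⟩]
  obtain ⟨z, hz, hzU, hzb, hzi⟩ := exists_mem_hullSegment_mem_nhds hab.symm hU
  exact ⟨z, hzU, hzb, hzi, mem_hullSegment_shorten hxa hz hzb, mem_hullSegment_shorten hya hz hzb⟩

section Semicontinuity

variable {L : Type*} [Finite L] {x : L → X}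

theorem eventually_convH_subset (A : Set L) {U : Set X} (hU : IsOpen U)
    (hAU : ConvH (x '' A) ⊆ U) : ∀ᶠ y in 𝓝 x, ConvH (y '' A) ⊆ U := by
  rcases A.eq_empty_or_nonempty with rfl | ⟨a, ha⟩
  · simp [convH_empty]
  have hsub : ConvH (x '' A) ⊆ connectedComponentIn U (x a) :=
    (isPreconnected_convH (A.toFinite.image x)).subset_connectedComponentIn
      (subset_convH _ (mem_image_of_mem x ha)) hAU
  have hnear : ∀ᶠ y in 𝓝 x, ∀ l ∈ A, y l ∈ connectedComponentIn U (x a) :=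
    (Filter.eventually_all_finite A.toFinite).2 fun l hl =>
      (continuous_apply l).continuousAt.eventually_mem
        (hU.connectedComponentIn.mem_nhds (hsub (subset_convH _ (mem_image_of_mem x hl))))
  filter_upwards [hnear] with y hy
  exact (convH_subset_of_finite (A.toFinite.image y) (image_subset_iff.2 hy)
    isPreconnected_connectedComponentIn).trans (connectedComponentIn_subset U (x a))

theorem eventually_disjoint_convH {A B : Set L}
    (h : Disjoint (ConvH (x '' A)) (ConvH (x '' B))) :
    ∀ᶠ y in 𝓝 x, Disjoint (ConvH (y '' A)) (ConvH (y '' B)) := by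
  obtain ⟨U, U', hU, hU', hAU, hBU', hUU'⟩ := SeparatedNhds.of_isCompact_isCompact
    (isCompact_convH (A.toFinite.image x)) (isCompact_convH (B.toFinite.image x)) h
  filter_upwards [eventually_convH_subset A hU hAU, eventually_convH_subset B hU' hBU']
    with y hyA hyB
  exact hUU'.mono hyA hyB

end Semicontinuity

section OffDiag

variable {P : Set X}

theorem joinedIn_offDiag_fst (hP : SegConvex P) {w w' y : X} (hw : w ∈ P) (hw' : w' ∈ P)
    (hy : y ∈ P) (hyw : y ∉ hullSegment w w') : JoinedIn P.offDiag (w, y) (w', y) := by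
  refine ((joinedIn_hullSegment w w').map (f := fun z => (z, y)) (by fun_prop)).mono ?_
  rintro _ ⟨z, hz, rfl⟩
  exact ⟨hP w hw w' hw' hz, hy, fun hzy : z = y => hyw (hzy ▸ hz)⟩

theorem joinedIn_offDiag_snd (hP : SegConvex P) {w y y' : X} (hw : w ∈ P) (hy : y ∈ P)
    (hy' : y' ∈ P) (hwy : w ∉ hullSegment y y') : JoinedIn P.offDiag (w, y) (w, y') := by
  refine ((joinedIn_offDiag_fst hP hy hy' hw hwy).map continuous_swap).mono ?_
  rintro _ ⟨⟨z, v⟩, ⟨hz, hv, hzv⟩, rfl⟩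
  exact ⟨hv, hz, hzv.symm⟩

variable {B : Set X}

theorem exists_joinedIn_offDiag (hB : SegConvex B) (hBp : B ∈ 𝓝 p) (hp : p ∈ innerPoints X)
    {w y : X} (hwy : (w, y) ∈ (B ∩ innerPoints X).offDiag) :
    ∃ x, JoinedIn (B ∩ innerPoints X).offDiag (w, y) (p, x) := by
  obtain ⟨hw, hy, hne⟩ := mem_offDiag.1 hwy
  have hP : SegConvex (B ∩ innerPoints X) := hB.inter segConvex_innerPoints
  have hpP : p ∈ B ∩ innerPoints X := ⟨mem_of_mem_nhds hBp, hp⟩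
  by_cases hyw : y ∈ hullSegment w p
  · -- `y` is in the way of `w`: it moves first, to a point beyond `p`.
    obtain ⟨x, hxB, hxp, hxi, hpx⟩ := exists_mem_hullSegment_beyond hp w hBp
    refine ⟨x, (joinedIn_offDiag_snd hP hw hy ⟨hxB, hxi⟩ fun hwx => hne ?_).trans
      (joinedIn_offDiag_fst hP hw hpP ⟨hxB, hxi⟩ fun hxw => hxp ?_)⟩
    · exact eq_of_mem_of_mem (hullSegment_subset_hullSegment_left hpx hyw) hwx
    · exact eq_of_mem_of_mem_right hpx hxw
  · exact ⟨y, joinedIn_offDiag_fst hP hw hpP hy hyw⟩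

theorem IsBranchPoint.joinedIn_offDiag (hb : IsBranchPoint b) (hB : SegConvex B)
    (hBb : B ∈ 𝓝 b) {x x' : X} (hx : x ∈ B ∩ innerPoints X) (hx' : x' ∈ B ∩ innerPoints X)
    (hxb : x ≠ b) (hxb' : x' ≠ b) : JoinedIn (B ∩ innerPoints X).offDiag (b, x) (b, x') := by
  have hP : SegConvex (B ∩ innerPoints X) := hB.inter segConvex_innerPoints
  have hbP : b ∈ B ∩ innerPoints X := ⟨mem_of_mem_nhds hBb, hb.mem_innerPoints⟩
  by_cases hbx : b ∈ hullSegment x x'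
  · -- The first point steps aside into a third branch `g` while the second one passes `b`.
    obtain ⟨g, hgB, hgb, hgi, hxg, hxg'⟩ := hb.exists_mem_hullSegment_beyond_two x x' hBb
    have hg : g ∈ B ∩ innerPoints X := ⟨hgB, hgi⟩
    refine (joinedIn_offDiag_fst hP hbP hg hx fun h => hxb ?_).trans
      ((joinedIn_offDiag_snd hP hg hx hx' fun h => ?_).trans
        (joinedIn_offDiag_fst hP hg hbP hx' fun h => hxb' ?_))
    · exact eq_of_mem_of_mem hxg h
    · rcases hullSegment_subset_union x x' b h with h | h
      · exact hgb (eq_of_mem_of_mem_right hxg h)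
      · exact hgb (eq_of_mem_of_mem_right hxg' (hullSegment_comm b x' ▸ h))
    · exact eq_of_mem_of_mem hxg' (hullSegment_comm g b ▸ h)
  · exact joinedIn_offDiag_snd hP hbP hx hx' hbx

end OffDiag

end Dendritic

section Hierarchy

/-- A cherry of a family `𝓕` of subsets of `L`, relative to `S`: two elements of `S` that some
member of `𝓕` separates from the rest of `S`. -/
structure IsCherry {L : Type*} (𝓕 : Set (Set L)) (S : Set L) (l₁ l₂ : L) : Prop where
  ne : l₁ ≠ l₂
  exists_inter_eq : ∃ C ∈ 𝓕, C ∩ S = {l₁, l₂}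

/-- Binary hierarchies, the combinatorial form of a binary tree with leaves `L`: the members of
`𝓕` are the sets of leaves below a node. -/
structure IsBinaryHierarchy {L : Type*} (𝓕 : Set (Set L)) : Prop where
  laminar : ∀ A ∈ 𝓕, ∀ B ∈ 𝓕, Disjoint A B ∨ A ⊆ B ∨ B ⊆ A
  singleton_mem (l : L) : {l} ∈ 𝓕
  exists_isCherry {S : Set L} (hS : S.Nontrivial) : ∃ l₁ l₂, IsCherry 𝓕 S l₁ l₂

/-- The members of `𝓕` that do not separate `l₁` from `l₂`. -/
def nonseparating {L : Type*} (𝓕 : Set (Set L)) (l₁ l₂ : L) : Set (Set L) :=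
  {A ∈ 𝓕 | l₁ ∈ A ↔ l₂ ∈ A}

/-- The configurations of points indexed by `L` such that disjoint members of the family `𝓕` have
disjoint hulls, where only the points with index in `S` count. -/
def compatConf {L X : Type*} [TopologicalSpace X] (𝓕 : Set (Set L)) (S : Set L) :
    Set (L → X) :=
  {x | ∀ A ∈ 𝓕, ∀ B ∈ 𝓕, Disjoint A B → Disjoint (ConvH (x '' (A ∩ S))) (ConvH (x '' (B ∩ S)))}

/-- The compatible configurations avoiding the end points of `X`. -/
def innerConf {L X : Type*} [TopologicalSpace X] (𝓕 : Set (Set L)) (S : Set L) :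
    Set (L → X) :=
  {x ∈ compatConf 𝓕 S | ∀ l, x l ∈ innerPoints X}

variable {L X : Type*} {𝓕 𝓖 : Set (Set L)} {S S' A B C : Set L} {l₁ l₂ : L}

theorem IsCherry.symm (hc : IsCherry 𝓕 S l₁ l₂) : IsCherry 𝓕 S l₂ l₁ :=
  ⟨hc.ne.symm, pair_comm l₁ l₂ ▸ hc.exists_inter_eq⟩

theorem IsCherry.left_mem (hc : IsCherry 𝓕 S l₁ l₂) : l₁ ∈ S := by
  obtain ⟨C, -, hC⟩ := hc.exists_inter_eq
  exact (hC.superset (Or.inl rfl)).2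

theorem IsCherry.right_mem (hc : IsCherry 𝓕 S l₁ l₂) : l₂ ∈ S := hc.symm.left_mem

theorem nonseparating_subset : nonseparating 𝓕 l₁ l₂ ⊆ 𝓕 := fun _ hA => hA.1

theorem IsBinaryHierarchy.subset_of_separating (h𝓕 : IsBinaryHierarchy 𝓕) (hC : C ∈ 𝓕)
    (hCS : C ∩ S = {l₁, l₂}) (hA : A ∈ 𝓕) (hsep : ¬(l₁ ∈ A ↔ l₂ ∈ A)) : A ⊆ C := by
  have h₁ : l₁ ∈ C := (hCS.superset (Or.inl rfl)).1
  have h₂ : l₂ ∈ C := (hCS.superset (Or.inr rfl)).1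
  rcases h𝓕.laminar A hA C hC with h | h | h
  · exact absurd (iff_of_false (disjoint_right.1 h h₁) (disjoint_right.1 h h₂)) hsep
  · exact h
  · exact absurd (iff_of_true (h h₁) (h h₂)) hsep

theorem inter_eq_singleton_of_separating (hCS : C ∩ S = {l₁, l₂}) (hAC : A ⊆ C)
    (hA : ¬(l₁ ∈ A ↔ l₂ ∈ A)) : A ∩ S = {l₁} ∨ A ∩ S = {l₂} := by
  have hAS : A ∩ S = A ∩ {l₁, l₂} := by rw [← hCS, ← inter_assoc, inter_eq_left.2 hAC]
  by_cases h₁ : l₁ ∈ A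
  · have h₂ : l₂ ∉ A := fun h₂ => hA (iff_of_true h₁ h₂)
    left
    rw [hAS, inter_insert_of_mem h₁, inter_singleton_eq_empty.2 h₂, insert_empty_eq]
  · have h₂ : l₂ ∈ A := by tauto
    right
    rw [hAS, inter_insert_of_notMem h₁, inter_singleton_of_mem h₂]

variable [TopologicalSpace X] {x w : L → X} {y : X}

theorem compatConf_anti_left (h : 𝓖 ⊆ 𝓕) :
    (compatConf 𝓕 S : Set (L → X)) ⊆ compatConf 𝓖 S :=
  fun _ hx A hA B hB => hx A (h hA) B (h hB)

theorem compatConf_anti_right (h : S' ⊆ S) :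
    (compatConf 𝓕 S : Set (L → X)) ⊆ compatConf 𝓕 S' :=
  fun _ hx A hA B hB hAB => (hx A hA B hB hAB).mono
    (convH_mono (image_mono (inter_subset_inter_right A h)))
    (convH_mono (image_mono (inter_subset_inter_right B h)))

theorem compatConf_eq_univ_of_subsingleton (hS : S.Subsingleton) :
    (compatConf 𝓕 S : Set (L → X)) = univ := by
  refine eq_univ_of_forall fun x A _ B _ hAB => ?_
  rcases (A ∩ S).eq_empty_or_nonempty with h | ⟨a, ha, haS⟩
  · simp only [h, image_empty, convH_empty, empty_disjoint]
  · have hB : B ∩ S = ∅ := eq_empty_iff_forall_notMem.2 fun b hb =>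
      disjoint_left.1 hAB ha (hS hb.2 haS ▸ hb.1)
    simp only [hB, image_empty, convH_empty, disjoint_empty]

theorem IsBinaryHierarchy.ne_of_mem_compatConf (h𝓕 : IsBinaryHierarchy 𝓕)
    (hx : x ∈ compatConf 𝓕 S) (h₁ : l₁ ∈ S) (h₂ : l₂ ∈ S) (hne : l₁ ≠ l₂) : x l₁ ≠ x l₂ := by
  have hdisj := hx {l₁} (h𝓕.singleton_mem l₁) {l₂} (h𝓕.singleton_mem l₂)
    (disjoint_singleton.2 hne)
  have mem_convH : ∀ {l}, l ∈ S → x l ∈ ConvH (x '' ({l} ∩ S)) :=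
    fun hl => subset_convH _ (mem_image_of_mem x ⟨rfl, hl⟩)
  exact hdisj.ne_of_mem (mem_convH h₁) (mem_convH h₂)

theorem update_mem_compatConf_nonseparating (h₁ : l₁ ∈ S) (hne : l₁ ≠ l₂)
    (hw : w ∈ compatConf 𝓕 (S \ {l₂})) :
    update w l₂ (w l₁) ∈ compatConf (nonseparating 𝓕 l₁ l₂) S := by
  have image_subset : ∀ A ∈ nonseparating 𝓕 l₁ l₂,
      update w l₂ (w l₁) '' (A ∩ S) ⊆ w '' (A ∩ (S \ {l₂})) := by
    rintro A hA _ ⟨l, hl, rfl⟩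
    by_cases h : l = l₂
    · subst h
      rw [update_self]
      exact mem_image_of_mem w ⟨hA.2.2 hl.1, h₁, hne⟩
    · rw [update_of_ne h]
      exact mem_image_of_mem w ⟨hl.1, hl.2, h⟩
  exact fun A hA B hB hAB => (hw A hA.1 B hB.1 hAB).mono (convH_mono (image_subset A hA))
    (convH_mono (image_subset B hB))

theorem disjoint_convH_of_mem_nonseparating (h𝓕 : IsBinaryHierarchy 𝓕) (hC : C ∈ 𝓕)
    (hCS : C ∩ S = {l₁, l₂}) (hx : x ∈ compatConf (nonseparating 𝓕 l₁ l₂) S) (hA : A ∈ 𝓕)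
    (hA' : ¬(l₁ ∈ A ↔ l₂ ∈ A)) (hB : B ∈ nonseparating 𝓕 l₁ l₂) (hAB : Disjoint A B) :
    Disjoint (ConvH (x '' (A ∩ S))) (ConvH (x '' (B ∩ S))) := by
  have hAC : A ⊆ C := h𝓕.subset_of_separating hC hCS hA hA'
  have h₁ : l₁ ∈ C := (hCS.superset (Or.inl rfl)).1
  have h₂ : l₂ ∈ C := (hCS.superset (Or.inr rfl)).1
  have hnotMem : l₁ ∉ B ∧ l₂ ∉ B := by
    have h₁ : l₁ ∈ A → l₁ ∉ B := fun h => disjoint_left.1 hAB h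
    have h₂ : l₂ ∈ A → l₂ ∉ B := fun h => disjoint_left.1 hAB h
    have hB' := hB.2
    tauto
  rcases h𝓕.laminar C hC B hB.1 with h | h | h
  · exact (hx C ⟨hC, iff_of_true h₁ h₂⟩ B hB h).mono_left
      (convH_mono (image_mono (inter_subset_inter_left S hAC)))
  · exact absurd (h h₁) hnotMem.1
  · have hBS : B ∩ S = ∅ := by
      refine eq_empty_iff_forall_notMem.2 fun l hl => ?_
      rcases hCS.subset ⟨h hl.1, hl.2⟩ with rfl | rfl
      exacts [hnotMem.1 hl.1, hnotMem.2 hl.1]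
    simp only [hBS, image_empty, convH_empty, disjoint_empty]

variable [T1Space X]

theorem disjoint_convH_of_separating (hCS : C ∩ S = {l₁, l₂}) (hAC : A ⊆ C) (hBC : B ⊆ C)
    (hA : ¬(l₁ ∈ A ↔ l₂ ∈ A)) (hB : ¬(l₁ ∈ B ↔ l₂ ∈ B)) (hAB : Disjoint A B)
    (hx : x l₁ ≠ x l₂) : Disjoint (ConvH (x '' (A ∩ S))) (ConvH (x '' (B ∩ S))) := by
  have hABS : Disjoint (A ∩ S) (B ∩ S) := hAB.mono inter_subset_left inter_subset_left
  rcases inter_eq_singleton_of_separating hCS hAC hA with h | h <;>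
    rcases inter_eq_singleton_of_separating hCS hBC hB with h' | h' <;>
    rw [h, h'] at hABS ⊢ <;>
    simp only [image_singleton, convH_singleton, disjoint_singleton] at hABS ⊢
  exacts [absurd rfl hABS, hx, hx.symm, absurd rfl hABS]

theorem IsBinaryHierarchy.mem_compatConf_iff (h𝓕 : IsBinaryHierarchy 𝓕)
    (hc : IsCherry 𝓕 S l₁ l₂) :
    x ∈ compatConf 𝓕 S ↔ x ∈ compatConf (nonseparating 𝓕 l₁ l₂) S ∧ x l₁ ≠ x l₂ := by
  refine ⟨fun hx => ⟨compatConf_anti_left nonseparating_subset hx,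
    h𝓕.ne_of_mem_compatConf hx hc.left_mem hc.right_mem hc.ne⟩, ?_⟩
  rintro ⟨hx, hne⟩ A hA B hB hAB
  obtain ⟨C, hC, hCS⟩ := hc.exists_inter_eq
  by_cases hA' : l₁ ∈ A ↔ l₂ ∈ A <;> by_cases hB' : l₁ ∈ B ↔ l₂ ∈ B
  · exact hx A ⟨hA, hA'⟩ B ⟨hB, hB'⟩ hAB
  · exact (disjoint_convH_of_mem_nonseparating h𝓕 hC hCS hx hB hB' ⟨hA, hA'⟩ hAB.symm).symm
  · exact disjoint_convH_of_mem_nonseparating h𝓕 hC hCS hx hA hA' ⟨hB, hB'⟩ hAB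
  · exact disjoint_convH_of_separating hCS (h𝓕.subset_of_separating hC hCS hA hA')
      (h𝓕.subset_of_separating hC hCS hB hB') hA' hB' hAB hne

theorem IsBinaryHierarchy.update_mem_compatConf (h𝓕 : IsBinaryHierarchy 𝓕)
    (hc : IsCherry 𝓕 S l₁ l₂) (hx : x ∈ compatConf 𝓕 S) (hy : y ∈ hullSegment (x l₁) (x l₂))
    (hne : y ≠ x l₁) : update x l₂ y ∈ compatConf 𝓕 S := by
  have hull_subset : ∀ A ∈ nonseparating 𝓕 l₁ l₂,
      ConvH (update x l₂ y '' (A ∩ S)) ⊆ ConvH (x '' (A ∩ S)) := by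
    refine fun A hA => convH_subset_convH ?_
    rintro _ ⟨l, hl, rfl⟩
    by_cases h : l = l₂
    · subst h
      rw [update_self]
      have h₁ : x l₁ ∈ ConvH (x '' (A ∩ S)) := subset_convH _ ⟨l₁, ⟨hA.2.2 hl.1, hc.left_mem⟩, rfl⟩
      exact hullSegment_subset_convH h₁ (subset_convH _ (mem_image_of_mem x hl)) hy
    · rw [update_of_ne h]
      exact subset_convH _ (mem_image_of_mem x hl)
  refine (h𝓕.mem_compatConf_iff hc).2 ⟨fun A hA B hB hAB => ?_, ?_⟩
  · exact (hx A hA.1 B hB.1 hAB).mono (hull_subset A hA) (hull_subset B hB)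
  · rw [update_of_ne hc.ne, update_self]
    exact hne.symm

end Hierarchy

section PathConnected

open IsDendritic

/-- A box of convex open sets in the configuration space in which the compatibility of a
configuration only depends on the two points indexed by the cherry being distinct. -/
structure IsCherryBox {L X : Type*} [TopologicalSpace X] (𝓕 : Set (Set L)) (S : Set L)
    (l₁ l₂ : L) (B : L → Set X) : Prop where
  isOpen (l : L) : IsOpen (B l)
  segConvex (l : L) : SegConvex (B l)
  mem_compatConf {u : L → X} (hu : u ∈ univ.pi B) (hne : u l₁ ≠ u l₂) : u ∈ compatConf 𝓕 S

variable {L X : Type*} {𝓕 : Set (Set L)} {S : Set L} {l₁ l₂ : L} [TopologicalSpace X]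
  {B : L → Set X} {w w' x z : L → X} {b y y' : X}

theorem update_mem_innerPoints (hw : ∀ l, w l ∈ innerPoints X) (hy : y ∈ innerPoints X) (l l' : L) :
    update w l y l' ∈ innerPoints X :=
  (forall_update_iff w fun _ p => p ∈ innerPoints X).2 ⟨hy, fun l _ => hw l⟩ l'

namespace IsCherryBox

theorem inter_mem_nhds (hB : IsCherryBox 𝓕 S l₁ l₂ B) (hne : l₁ ≠ l₂)
    (hw : update w l₂ (w l₁) ∈ univ.pi B) : B l₁ ∩ B l₂ ∈ 𝓝 (w l₁) := by
  have h₁ := hw l₁ trivial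
  have h₂ := hw l₂ trivial
  rw [update_of_ne hne] at h₁
  rw [update_self] at h₂
  exact ((hB.isOpen l₁).inter (hB.isOpen l₂)).mem_nhds ⟨h₁, h₂⟩

theorem update_mem_innerConf (hB : IsCherryBox 𝓕 S l₁ l₂ B) (hne : l₁ ≠ l₂)
    (hw : update w l₂ (w l₁) ∈ univ.pi B) (hw' : ∀ l, w l ∈ innerPoints X)
    (hy : y ∈ B l₂ ∩ innerPoints X) (hyw : y ≠ w l₁) : update w l₂ y ∈ innerConf 𝓕 S := by
  refine ⟨hB.mem_compatConf ?_ ?_, update_mem_innerPoints hw' hy.2 l₂⟩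
  · exact update_mem_pi_iff.2 ⟨(update_mem_pi_iff.1 hw).1, fun _ => hy.1⟩
  · rw [update_of_ne hne, update_self]
    exact hyw.symm

end IsCherryBox

variable [IsDendritic X]

theorem isOpen_compatConf [Finite L] (𝓕 : Set (Set L)) (S : Set L) :
    IsOpen (compatConf 𝓕 S : Set (L → X)) := by
  refine isOpen_iff_mem_nhds.2 fun x hx => ?_
  have hdisj : ∀ᶠ y in 𝓝 x, ∀ A ∈ 𝓕, ∀ B ∈ 𝓕, Disjoint A B →
      Disjoint (ConvH (y '' (A ∩ S))) (ConvH (y '' (B ∩ S))) := by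
    simp only [Filter.eventually_all_finite 𝓕.toFinite, Filter.eventually_all]
    exact fun A hA B hB hAB => eventually_disjoint_convH (hx A hA B hB hAB)
  exact hdisj

theorem exists_pi_segConvex_subset [Finite L] {O : Set (L → X)} (hO : IsOpen O) (hx : x ∈ O) :
    ∃ B : L → Set X, (∀ l, IsOpen (B l)) ∧ (∀ l, SegConvex (B l)) ∧ x ∈ univ.pi B ∧
      univ.pi B ⊆ O := by
  obtain ⟨U, hU, hUO⟩ := isOpen_pi_iff'.1 hO x hx
  exact ⟨fun l => connectedComponentIn (U l) (x l), fun l => (hU l).1.connectedComponentIn,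
    fun l => segConvex_of_isPreconnected isPreconnected_connectedComponentIn,
    fun l _ => mem_connectedComponentIn (hU l).2,
    (pi_mono fun l _ => connectedComponentIn_subset (U l) (x l)).trans hUO⟩

theorem IsBinaryHierarchy.exists_isCherryBox [Finite L] (h𝓕 : IsBinaryHierarchy 𝓕)
    (hc : IsCherry 𝓕 S l₁ l₂) (hw : w ∈ compatConf 𝓕 (S \ {l₂})) :
    ∃ B : L → Set X, IsCherryBox 𝓕 S l₁ l₂ B ∧ update w l₂ (w l₁) ∈ univ.pi B := by
  obtain ⟨B, hBo, hBc, hwB, hB⟩ := exists_pi_segConvex_subset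
    (isOpen_compatConf (nonseparating 𝓕 l₁ l₂) S)
    (update_mem_compatConf_nonseparating hc.left_mem hc.ne hw)
  exact ⟨B, ⟨hBo, hBc, fun hu hne => (h𝓕.mem_compatConf_iff hc).2 ⟨hB hu, hne⟩⟩, hwB⟩

theorem joinedIn_pi_inter_innerPoints (hB : ∀ l, SegConvex (B l))
    (hx : x ∈ univ.pi B) (hx' : ∀ l, x l ∈ innerPoints X) (hz : z ∈ univ.pi B)
    (hz' : ∀ l, z l ∈ innerPoints X) : JoinedIn (univ.pi fun l => B l ∩ innerPoints X) x z :=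
  JoinedIn.pi fun l => (joinedIn_hullSegment (x l) (z l)).mono <|
    ((hB l).inter segConvex_innerPoints) (x l) ⟨hx l trivial, hx' l⟩ (z l) ⟨hz l trivial, hz' l⟩

namespace IsCherryBox

theorem joinedIn_innerConf (hB : IsCherryBox 𝓕 S l₁ l₂ B) (hne : l₁ ≠ l₂)
    (hw : update w l₂ (w l₁) ∈ univ.pi B) (hwi : ∀ l, w l ∈ innerPoints X)
    (hw' : update w' l₂ (w' l₁) ∈ univ.pi B) (hwi' : ∀ l, w' l ∈ innerPoints X)
    (h : JoinedIn ((B l₁ ∩ B l₂) ∩ innerPoints X).offDiag (w l₁, y) (w' l₁, y')) :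
    JoinedIn (innerConf 𝓕 S) (update w l₂ y) (update w' l₂ y') := by
  have hpi := joinedIn_pi_inter_innerPoints hB.segConvex hw
    (update_mem_innerPoints hwi (hwi l₁) l₂) hw' (update_mem_innerPoints hwi' (hwi' l₁) l₂)
  let place : (X × X) × (L → X) → L → X := fun q => update (update q.2 l₁ q.1.1) l₂ q.1.2
  have hplace : Continuous place := by fun_prop
  have place_eq (v : L → X) (p : X) : place ((v l₁, p), update v l₂ (v l₁)) = update v l₂ p := by
    change update (update (update v l₂ (v l₁)) l₁ (v l₁)) l₂ p = _
    rw [update_comm hne.symm, update_idem, update_eq_self]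
  have hjoin := (h.prod hpi).map hplace
  rw [place_eq, place_eq] at hjoin
  refine hjoin.mono ?_
  rintro _ ⟨⟨⟨p, q⟩, r⟩, ⟨⟨hp, hq, hpq⟩, hr⟩, rfl⟩
  refine ⟨hB.mem_compatConf ?_ ?_, update_mem_innerPoints
    (update_mem_innerPoints (fun l => (hr l trivial).2) hp.2 l₁) hq.2 l₂⟩
  · have h₁ : update r l₁ p ∈ univ.pi B :=
      update_mem_pi_iff.2 ⟨fun l _ => (hr l trivial).1, fun _ => hp.1.1⟩
    exact update_mem_pi_iff.2 ⟨fun l _ => h₁ l trivial, fun _ => hq.1.2⟩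
  · simpa only [place, update_self, update_of_ne hne] using hpq

end IsCherryBox

section Cherry

variable (h𝓕 : IsBinaryHierarchy 𝓕) (hc : IsCherry 𝓕 S l₁ l₂)

include h𝓕 hc

theorem exists_joinedIn_update_mem_nhds (hx : update w l₂ y ∈ innerConf 𝓕 S) {U : Set X}
    (hU : U ∈ 𝓝 (w l₁)) : ∃ y' ∈ U ∩ innerPoints X, y' ≠ w l₁ ∧
      JoinedIn (innerConf 𝓕 S) (update w l₂ y) (update w l₂ y') := by
  have hy : y ∈ innerPoints X := by simpa only [update_self] using hx.2 l₂
  have hne : w l₁ ≠ y := by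
    simpa only [update_of_ne hc.ne, update_self] using
      h𝓕.ne_of_mem_compatConf hx.1 hc.left_mem hc.right_mem hc.ne
  obtain ⟨y', hy', hyU, hyw, hyi⟩ := exists_mem_hullSegment_mem_nhds hne hU
  refine ⟨y', ⟨hyU, hyi⟩, hyw, ?_⟩
  refine ((joinedIn_hullSegment y' y).symm.map (f := update w l₂) (by fun_prop)).mono ?_
  rintro _ ⟨s, hs, rfl⟩
  have hsw : s ∈ hullSegment (w l₁) y :=
    hullSegment_subset_convH hy' (right_mem_hullSegment (w l₁) y) hs
  have hs_ne : s ≠ w l₁ := fun h => hyw (eq_of_mem_of_mem hy' (h ▸ hs)).symm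
  rw [← update_idem y s w]
  refine ⟨h𝓕.update_mem_compatConf hc hx.1 ?_ ?_,
    update_mem_innerPoints hx.2 (segConvex_innerPoints y' hyi y hy hs) l₂⟩ <;>
  simpa only [update_of_ne hc.ne, update_self]

theorem IsCherryBox.exists_joinedIn_update (hB : IsCherryBox 𝓕 S l₁ l₂ B)
    (hw : update w l₂ (w l₁) ∈ univ.pi B) (hwi : ∀ l, w l ∈ innerPoints X)
    (hw' : update w' l₂ (w' l₁) ∈ univ.pi B) (hwi' : ∀ l, w' l ∈ innerPoints X)
    (hy : update w l₂ y ∈ innerConf 𝓕 S) :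
    ∃ y', JoinedIn (innerConf 𝓕 S) (update w l₂ y) (update w' l₂ y') := by
  have hwB := hB.inter_mem_nhds hc.ne hw
  obtain ⟨p, hp, hpw, hyp⟩ := exists_joinedIn_update_mem_nhds h𝓕 hc hy hwB
  obtain ⟨q, hpq⟩ := exists_joinedIn_offDiag ((hB.segConvex l₁).inter (hB.segConvex l₂))
    (hB.inter_mem_nhds hc.ne hw') (hwi' l₁) ⟨⟨mem_of_mem_nhds hwB, hwi l₁⟩, hp, hpw.symm⟩
  exact ⟨q, hyp.trans (hB.joinedIn_innerConf hc.ne hw hwi hw' hwi' hpq)⟩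

variable [Finite L]

theorem exists_update_mem_innerConf (hz : z ∈ innerConf 𝓕 (S \ {l₂})) :
    ∃ y, update z l₂ y ∈ innerConf 𝓕 S := by
  obtain ⟨B, hB, hzB⟩ := h𝓕.exists_isCherryBox hc hz.1
  obtain ⟨y, hyB, hyz, hyi, -⟩ := exists_mem_hullSegment_beyond (hz.2 l₁) (z l₁)
    (hB.inter_mem_nhds hc.ne hzB)
  exact ⟨y, hB.update_mem_innerConf hc.ne hzB hz.2 ⟨hyB.2, hyi⟩ hyz⟩

theorem exists_joinedIn_update (hconn : IsPreconnected (innerConf 𝓕 (S \ {l₂}) : Set (L → X)))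
    (hw : w ∈ innerConf 𝓕 (S \ {l₂})) (hz : z ∈ innerConf 𝓕 (S \ {l₂}))
    (hy : update w l₂ y ∈ innerConf 𝓕 S) :
    ∃ y', JoinedIn (innerConf 𝓕 S) (update w l₂ y) (update z l₂ y') := by
  refine hconn.induction₂' (fun w z => ∀ y, update w l₂ y ∈ innerConf 𝓕 S →
    ∃ y', JoinedIn (innerConf 𝓕 S) (update w l₂ y) (update z l₂ y')) ?_ ?_ hw hz y hy
  · intro v hv
    obtain ⟨B, hB, hvB⟩ := h𝓕.exists_isCherryBox hc hv.1
    have hnear : ∀ᶠ v' in 𝓝 v, update v' l₂ (v' l₁) ∈ univ.pi B :=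
      (by fun_prop : Continuous fun v' : L → X => update v' l₂ (v' l₁)).continuousAt.eventually_mem
        ((isOpen_set_pi finite_univ fun l _ => hB.isOpen l).mem_nhds hvB)
    filter_upwards [self_mem_nhdsWithin, mem_nhdsWithin_of_mem_nhds hnear] with v' hv' hvB'
    exact ⟨fun y => hB.exists_joinedIn_update h𝓕 hc hvB hv.2 hvB' hv'.2,
      fun y => hB.exists_joinedIn_update h𝓕 hc hvB' hv'.2 hvB hv.2⟩
  · intro v₁ v₂ v₃ _ _ _ h₁₂ h₂₃ y hy
    obtain ⟨y', hy'⟩ := h₁₂ y hy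
    obtain ⟨y'', hy''⟩ := h₂₃ y' hy'.target_mem
    exact ⟨y'', hy'.trans hy''⟩

theorem joinedIn_update_update (hb : IsBranchPoint (z l₁)) (hz : z ∈ innerConf 𝓕 (S \ {l₂}))
    (hy : update z l₂ y ∈ innerConf 𝓕 S) (hy' : update z l₂ y' ∈ innerConf 𝓕 S) :
    JoinedIn (innerConf 𝓕 S) (update z l₂ y) (update z l₂ y') := by
  obtain ⟨B, hB, hzB⟩ := h𝓕.exists_isCherryBox hc hz.1
  have hnhds := hB.inter_mem_nhds hc.ne hzB
  obtain ⟨p, hp, hpz, hyp⟩ := exists_joinedIn_update_mem_nhds h𝓕 hc hy hnhds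
  obtain ⟨q, hq, hqz, hyq⟩ := exists_joinedIn_update_mem_nhds h𝓕 hc hy' hnhds
  have hpq := hb.joinedIn_offDiag ((hB.segConvex l₁).inter (hB.segConvex l₂)) hnhds hp hq hpz hqz
  exact (hyp.trans (hB.joinedIn_innerConf hc.ne hzB hz.2 hzB hz.2 hpq)).trans hyq.symm

theorem isPathConnected_innerConf_of_isCherry
    (hconn : IsPathConnected (innerConf 𝓕 (S \ {l₂}) : Set (L → X)))
    (hb : IsBranchPoint (z l₁)) (hz : z ∈ innerConf 𝓕 (S \ {l₂})) :
    IsPathConnected (innerConf 𝓕 S : Set (L → X)) := by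
  have to_fibre : ∀ x ∈ innerConf 𝓕 S, ∃ y, JoinedIn (innerConf 𝓕 S) x (update z l₂ y) := by
    intro x hx
    have hx' : x ∈ innerConf 𝓕 (S \ {l₂}) := ⟨compatConf_anti_right sdiff_subset hx.1, hx.2⟩
    simpa only [update_eq_self] using exists_joinedIn_update h𝓕 hc
      hconn.isConnected.isPreconnected hx' hz (y := x l₂) (by rwa [update_eq_self])
  obtain ⟨y, hy⟩ := exists_update_mem_innerConf h𝓕 hc hz
  refine ⟨update z l₂ y, hy, fun {x} hx => ?_⟩
  obtain ⟨y', hxy'⟩ := to_fibre x hx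
  exact (joinedIn_update_update h𝓕 hc hb hz hy hxy'.target_mem).trans hxy'.symm

end Cherry

variable [Finite L]

theorem isPathConnected_innerConf_and_exists (h𝓕 : IsBinaryHierarchy 𝓕) (hb : IsBranchPoint b)
    (S : Set L) : IsPathConnected (innerConf 𝓕 S : Set (L → X)) ∧
      ∀ l, ∃ z ∈ (innerConf 𝓕 S : Set (L → X)), z l = b := by
  induction S using WellFoundedLT.induction with
  | _ S ih =>
  rcases S.subsingleton_or_nontrivial with hS | hS
  · have hinner : (innerConf 𝓕 S : Set (L → X)) = univ.pi fun _ => innerPoints X := by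
      ext x
      simp only [innerConf, compatConf_eq_univ_of_subsingleton hS, mem_univ, true_and,
        mem_ofPred_eq, mem_univ_pi]
    have hb' : (fun _ => b) ∈ (innerConf 𝓕 S : Set (L → X)) :=
      hinner ▸ fun _ _ => hb.mem_innerPoints
    refine ⟨⟨_, hb', fun {x} hx => ?_⟩, fun l => ⟨_, hb', rfl⟩⟩
    rw [hinner] at hx ⊢
    exact JoinedIn.pi fun l => (joinedIn_hullSegment b (x l)).mono
      (segConvex_innerPoints b hb.mem_innerPoints (x l) (hx l trivial))
  have ih_cherry : ∀ {l₁ l₂}, IsCherry 𝓕 S l₁ l₂ → S \ {l₂} < S := fun hc =>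
    sdiff_singleton_ssubset.2 hc.right_mem
  obtain ⟨l₁, l₂, hc⟩ := h𝓕.exists_isCherry hS
  constructor
  · obtain ⟨hconn, hex⟩ := ih _ (ih_cherry hc)
    obtain ⟨z, hz, hzb⟩ := hex l₁
    exact isPathConnected_innerConf_of_isCherry h𝓕 hc hconn (hzb ▸ hb) hz
  · intro l
    obtain ⟨l₁, l₂, hc, hl⟩ : ∃ l₁ l₂, IsCherry 𝓕 S l₁ l₂ ∧ l ≠ l₂ := by
      by_cases hl : l = l₂
      · exact ⟨l₂, l₁, hc.symm, hl ▸ hc.ne.symm⟩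
      · exact ⟨l₁, l₂, hc, hl⟩
    obtain ⟨z, hz, hzb⟩ := (ih _ (ih_cherry hc)).2 l
    obtain ⟨y, hy⟩ := exists_update_mem_innerConf h𝓕 hc hz
    exact ⟨update z l₂ y, hy, (update_of_ne hl y z).trans hzb⟩

theorem isPathConnected_compatConf (h𝓕 : IsBinaryHierarchy 𝓕) (hb : IsBranchPoint b)
    (S : Set L) : IsPathConnected (compatConf 𝓕 S : Set (L → X)) := by
  obtain ⟨z, hz, hzjoin⟩ := (isPathConnected_innerConf_and_exists h𝓕 hb S).1
  have : Nontrivial X := let ⟨a, _, _, ha, _⟩ := hb; ⟨a, b, ha⟩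
  refine ⟨z, hz.1, fun {x} hx => ?_⟩
  obtain ⟨B, hBo, hBc, hxB, hB⟩ := exists_pi_segConvex_subset (isOpen_compatConf 𝓕 S) hx
  have hinner : ∀ l, ∃ y ∈ B l, y ∈ innerPoints X := fun l =>
    dense_innerPoints.inter_open_nonempty (B l) (hBo l) ⟨x l, hxB l trivial⟩
  choose y hyB hyi using hinner
  have hxy : JoinedIn (compatConf 𝓕 S) x y := (JoinedIn.pi fun l =>
    (joinedIn_hullSegment (x l) (y l)).mono (hBc l _ (hxB l trivial) _ (hyB l))).mono hB
  exact ((hzjoin ⟨hxy.target_mem, hyi⟩).mono fun _ h => h.1).trans hxy.symm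

end PathConnected

namespace TreeSpace

open unitInterval

variable {V : Type*} {G : SimpleGraph V} {e f : G.Dart} {u v w : V}

section FarSide

/-- The set of vertices on the far side of a dart `e`: those that can be reached from the head
of `e` after the edge of `e` has been removed. -/
def farSide (e : G.Dart) : Set V := {v | (G.deleteEdges {e.edge}).Reachable e.snd v}

theorem snd_mem_farSide (e : G.Dart) : e.snd ∈ farSide e := SimpleGraph.Reachable.refl _

theorem fst_notMem_farSide (hG : G.IsAcyclic) (e : G.Dart) : e.fst ∉ farSide e := fun h =>
  SimpleGraph.isBridge_iff.1 (SimpleGraph.isAcyclic_iff_forall_adj_isBridge.1 hG e.adj)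
    (SimpleGraph.Reachable.symm h)

theorem fst_mem_farSide_iff (h : f.edge ≠ e.edge) : f.fst ∈ farSide e ↔ f.snd ∈ farSide e := by
  have hadj : (G.deleteEdges {e.edge}).Adj f.fst f.snd := SimpleGraph.deleteEdges_adj.2 ⟨f.adj, h⟩
  exact ⟨fun hf => hf.trans hadj.reachable, fun hf => hf.trans hadj.symm.reachable⟩

theorem mem_farSide_symm (hG : G.IsTree) : v ∈ farSide e.symm ↔ v ∉ farSide e := by
  have hstart (e : G.Dart) : e.fst ∈ farSide e.symm ↔ e.fst ∉ farSide e :=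
    iff_of_true (snd_mem_farSide e.symm) (fst_notMem_farSide hG.isAcyclic e)
  have hstep (f : G.Dart) (hf : f.fst ∈ farSide e.symm ↔ f.fst ∉ farSide e) :
      f.snd ∈ farSide e.symm ↔ f.snd ∉ farSide e := by
    by_cases h : f.edge = e.edge
    · rcases (SimpleGraph.dart_edge_eq_iff f e).1 h with rfl | rfl
      · exact iff_not_comm.1 (hstart f.symm)
      · exact hstart e
    · rwa [← fst_mem_farSide_iff h, ← fst_mem_farSide_iff (e.edge_symm.symm ▸ h)]
  have hreach := (SimpleGraph.reachable_iff_reflTransGen e.fst v).1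
    (hG.connected.preconnected e.fst v)
  induction hreach with
  | refl => exact hstart e
  | tail _ hadj ih => exact hstep ⟨(_, _), hadj⟩ ih

theorem mem_farSide_of_walk (e : G.Dart) (p : G.Walk e.snd v) (hp : e.fst ∉ p.support) :
    v ∈ farSide e :=
  SimpleGraph.reachable_deleteEdges_iff_exists_walk.2
    ⟨p, fun h => hp (p.fst_mem_support_of_mem_edges h)⟩

theorem exists_mem_farSide (hG : G.Connected) (huv : u ≠ v) :
    ∃ e : G.Dart, e.fst = u ∧ v ∈ farSide e := by
  obtain ⟨p, hp⟩ := hG.exists_isPath u v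
  cases p with
  | nil => exact absurd rfl huv
  | cons h p =>
    exact ⟨⟨(_, _), h⟩, rfl,
      mem_farSide_of_walk _ p ((SimpleGraph.Walk.cons_isPath_iff h p).1 hp).2⟩

end FarSide

section Point

/-- The point of the geometric realization at parameter `t` on the dart `e`. -/
def point (e : G.Dart) (t : I) : TreeSpace G := Quot.mk _ (e, t)

theorem continuous_point (e : G.Dart) : Continuous (point e) :=
  continuous_quot_mk.comp (Continuous.prodMk_right e)

theorem exists_point (x : TreeSpace G) : ∃ e t, point e t = x := by
  obtain ⟨⟨e, t⟩, rfl⟩ := Quot.exists_rep x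
  exact ⟨e, t, rfl⟩

theorem point_symm (e : G.Dart) (t : I) : point e.symm t = point e (σ t) :=
  Quot.sound (Or.inl ⟨rfl, by simp⟩)

theorem point_one (e : G.Dart) : point e 1 = point e.symm 0 := by rw [point_symm, symm_zero]

theorem point_zero_eq (h : e.fst = f.fst) : point e 0 = point f 0 :=
  Quot.sound (Or.inr ⟨h, rfl, rfl⟩)

theorem exists_point_Ioo_or_zero (x : TreeSpace G) :
    (∃ e, ∃ t ∈ Ioo 0 1, point e t = x) ∨ ∃ e, point e 0 = x := by
  obtain ⟨e, t, rfl⟩ := exists_point x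
  rcases eq_or_ne t 0 with rfl | h₀
  · exact Or.inr ⟨e, rfl⟩
  rcases eq_or_ne t 1 with rfl | h₁
  · exact Or.inr ⟨e.symm, (point_one e).symm⟩
  exact Or.inl ⟨e, t, ⟨unitInterval.pos_iff_ne_zero.2 h₀, unitInterval.lt_one_iff_ne_one.2 h₁⟩, rfl⟩

/-- The extension of a function on the vertices which is affine along every edge. -/
def affineExtension (F : V → ℝ) : TreeSpace G → ℝ :=
  Quot.lift (fun p : G.Dart × I => AffineMap.lineMap (F p.1.fst) (F p.1.snd) (p.2 : ℝ)) <| by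
    rintro ⟨e, s⟩ ⟨f, t⟩ (⟨rfl, hst⟩ | ⟨hef, hs, ht⟩)
    · simp only at hst
      rw [hst, AffineMap.lineMap_apply_one_sub]
      rfl
    · simp only at hs ht hef
      rw [hs, ht, AffineMap.lineMap_apply_zero, AffineMap.lineMap_apply_zero]
      exact congrArg F hef

theorem affineExtension_point (F : V → ℝ) (e : G.Dart) (t : I) :
    affineExtension F (point e t) = AffineMap.lineMap (F e.fst) (F e.snd) (t : ℝ) := rfl

instance : DiscreteTopology G.Dart := ⟨rfl⟩

theorem continuous_affineExtension (F : V → ℝ) : Continuous (affineExtension (G := G) F) := by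
  refine continuous_quot_lift _ ?_
  have hfst : Continuous fun e : G.Dart => F e.fst := continuous_of_discreteTopology
  have hsnd : Continuous fun e : G.Dart => F e.snd := continuous_of_discreteTopology
  simp only [AffineMap.lineMap_apply_ring']
  exact ((continuous_subtype_val.comp continuous_snd).mul
    ((hsnd.comp continuous_fst).sub (hfst.comp continuous_fst))).add (hfst.comp continuous_fst)

end Point

section EdgeCoord

/-- The projection of a tree onto the dart `e`, as a coordinate in `[0, 1]`. -/
def edgeCoord (e : G.Dart) : TreeSpace G → ℝ := affineExtension ((farSide e).indicator 1)

theorem continuous_edgeCoord (e : G.Dart) : Continuous (edgeCoord e) := continuous_affineExtension _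

theorem edgeCoord_mem_Icc (e : G.Dart) (x : TreeSpace G) : edgeCoord e x ∈ Icc (0 : ℝ) 1 := by
  obtain ⟨f, t, rfl⟩ := exists_point x
  have hmem (v : V) : (farSide e).indicator 1 v ∈ Icc (0 : ℝ) 1 :=
    ⟨indicator_nonneg (fun _ _ => zero_le_one) v, indicator_le_self' (by simp) v⟩
  exact (convex_Icc 0 1).lineMap_mem (hmem f.fst) (hmem f.snd) t.2

theorem edgeCoord_zero_of_mem (h : f.fst ∈ farSide e) : edgeCoord e (point f 0) = 1 := by
  simp [edgeCoord, affineExtension_point, h]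

theorem edgeCoord_zero_of_notMem (h : f.fst ∉ farSide e) : edgeCoord e (point f 0) = 0 := by
  simp [edgeCoord, affineExtension_point, h]

theorem edgeCoord_self (hG : G.IsAcyclic) (e : G.Dart) (t : I) : edgeCoord e (point e t) = t := by
  simp [edgeCoord, affineExtension_point, snd_mem_farSide, fst_notMem_farSide hG,
    AffineMap.lineMap_apply]

theorem edgeCoord_of_edge_ne (h : f.edge ≠ e.edge) (t : I) :
    edgeCoord e (point f t) = edgeCoord e (point f 0) := by
  have hF : (farSide e).indicator (1 : V → ℝ) f.fst = (farSide e).indicator 1 f.snd := by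
    simp only [indicator, fst_mem_farSide_iff h, Pi.one_apply]
  simp only [edgeCoord, affineExtension_point, hF, AffineMap.lineMap_same_apply]

theorem edgeCoord_symm (hG : G.IsTree) (e : G.Dart) (x : TreeSpace G) :
    edgeCoord e.symm x = 1 - edgeCoord e x := by
  obtain ⟨f, t, rfl⟩ := exists_point x
  have hF (v : V) : (farSide e.symm).indicator (1 : V → ℝ) v = 1 - (farSide e).indicator 1 v := by
    by_cases h : v ∈ farSide e <;> simp [indicator, mem_farSide_symm hG, h]
  simp only [edgeCoord, affineExtension_point, hF, AffineMap.lineMap_apply_ring']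
  ring

theorem edgeCoord_point_mem_uIcc (e f : G.Dart) {r s t : I} (hr : r ∈ uIcc s t) :
    edgeCoord e (point f r) ∈ uIcc (edgeCoord e (point f s)) (edgeCoord e (point f t)) := by
  have hr' : (r : ℝ) ∈ segment ℝ (s : ℝ) t := by
    rw [segment_eq_uIcc]
    exact (Subtype.mono_coe _).mapsTo_uIcc hr
  rw [← segment_eq_uIcc]
  simp only [edgeCoord, affineExtension_point]
  rw [← image_segment]
  exact mem_image_of_mem _ hr'

theorem eq_point_of_edgeCoord_eq (hG : G.IsAcyclic) {t : I} (ht : t ∈ Ioo 0 1) {x : TreeSpace G}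
    (hx : edgeCoord e x = t) : x = point e t := by
  obtain ⟨f, s, rfl⟩ := exists_point x
  by_cases h : f.edge = e.edge
  · rcases (SimpleGraph.dart_edge_eq_iff f e).1 h with rfl | rfl
    · rw [edgeCoord_self hG] at hx
      rw [Subtype.ext hx]
    · rw [point_symm] at hx ⊢
      rw [edgeCoord_self hG] at hx
      rw [Subtype.ext hx]
  · rw [edgeCoord_of_edge_ne h] at hx
    by_cases hf : f.fst ∈ farSide e
    · rw [edgeCoord_zero_of_mem hf] at hx
      exact absurd (Subtype.ext hx.symm) ht.2.ne
    · rw [edgeCoord_zero_of_notMem hf] at hx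
      exact absurd (Subtype.ext hx.symm) ht.1.ne'

theorem exists_edgeCoord_pos (hG : G.IsTree) {a : TreeSpace G} (ha : a ≠ point e 0) :
    ∃ f : G.Dart, f.fst = e.fst ∧ 0 < edgeCoord f a := by
  have hnear (g : G.Dart) (t : I) (hg : g.fst = e.fst) (ht : point g t ≠ point e 0) :
      ∃ f : G.Dart, f.fst = e.fst ∧ 0 < edgeCoord f (point g t) := by
    refine ⟨g, hg, ?_⟩
    rw [edgeCoord_self hG.isAcyclic]
    exact unitInterval.pos_iff_ne_zero.2 fun h => ht (h ▸ point_zero_eq hg)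
  obtain ⟨g, t, rfl⟩ := exists_point a
  by_cases hfst : g.fst = e.fst
  · exact hnear g t hfst ha
  by_cases hsnd : g.snd = e.fst
  · have hg : point g t = point g.symm (σ t) := by rw [point_symm, symm_symm]
    rw [hg] at ha ⊢
    exact hnear g.symm (σ t) hsnd ha
  obtain ⟨f, hf, hgf⟩ := exists_mem_farSide hG.connected (Ne.symm hfst)
  refine ⟨f, hf, ?_⟩
  have hedge : g.edge ≠ f.edge := by
    intro h
    rcases (SimpleGraph.dart_edge_eq_iff g f).1 h with rfl | rfl
    exacts [hfst hf, hsnd hf]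
  rw [edgeCoord_of_edge_ne hedge, edgeCoord_zero_of_mem hgf]
  exact zero_lt_one

theorem edgeCoord_injective (hG : G.IsTree) :
    Injective fun (x : TreeSpace G) (e : G.Dart) => edgeCoord e x := by
  intro a b hab
  have h (e : G.Dart) : edgeCoord e a = edgeCoord e b := congrFun hab e
  rcases exists_point_Ioo_or_zero a with ⟨e, t, ht, rfl⟩ | ⟨e, rfl⟩
  · exact (eq_point_of_edgeCoord_eq hG.isAcyclic ht
      ((h e).symm.trans (edgeCoord_self hG.isAcyclic e t))).symm
  · by_contra hne
    obtain ⟨f, hf, hpos⟩ := exists_edgeCoord_pos hG (Ne.symm hne)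
    rw [← h f, ← point_zero_eq hf, edgeCoord_self hG.isAcyclic] at hpos
    exact lt_irrefl _ hpos

theorem t2Space (hG : G.IsTree) : T2Space (TreeSpace G) :=
  T2Space.of_injective_continuous (edgeCoord_injective hG) (continuous_pi continuous_edgeCoord)

end EdgeCoord

section CoordInterval

variable {a b x y : TreeSpace G}

/-- The set of points all of whose edge coordinates lie between those of `a` and `b`; in a tree
it is the segment from `a` to `b`. -/
def coordInterval (a b : TreeSpace G) : Set (TreeSpace G) :=
  {y | ∀ e, edgeCoord e y ∈ uIcc (edgeCoord e a) (edgeCoord e b)}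

theorem coordInterval_comm (a b : TreeSpace G) : coordInterval a b = coordInterval b a := by
  simp only [coordInterval, uIcc_comm]

theorem left_mem_coordInterval (a b : TreeSpace G) : a ∈ coordInterval a b := fun _ => left_mem_uIcc

theorem eq_of_mem_coordInterval (hG : G.IsTree) (hy : y ∈ coordInterval a b)
    (ha : a ∈ coordInterval y b) : a = y :=
  edgeCoord_injective hG <| funext fun e => eq_of_mem_uIcc_of_mem_uIcc (ha e) (hy e)

theorem point_mem_of_isPreconnected (hG : G.IsAcyclic) {C : Set (TreeSpace G)} (ha : a ∈ C)
    (hb : b ∈ C) (hC : IsPreconnected C) {t : I} (ht : t ∈ Ioo 0 1)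
    (htab : (t : ℝ) ∈ uIcc (edgeCoord e a) (edgeCoord e b)) : point e t ∈ C := by
  obtain ⟨c, hc, hct⟩ := (hC.image _ (continuous_edgeCoord e).continuousOn).ordConnected.uIcc_subset
    (mem_image_of_mem _ ha) (mem_image_of_mem _ hb) htab
  exact eq_point_of_edgeCoord_eq hG ht hct ▸ hc

theorem coordInterval_subset (hG : G.IsTree) {C : Set (TreeSpace G)} (ha : a ∈ C) (hb : b ∈ C)
    (hC : IsClosed C) (hC' : IsPreconnected C) : coordInterval a b ⊆ C := by
  intro y hy
  rcases exists_point_Ioo_or_zero y with ⟨e, t, ht, rfl⟩ | ⟨e, rfl⟩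
  · exact point_mem_of_isPreconnected hG.isAcyclic ha hb hC' ht
      (edgeCoord_self hG.isAcyclic e t ▸ hy e)
  rcases eq_or_ne a (point e 0) with rfl | hne
  · exact ha
  obtain ⟨f, hf, hpos⟩ := exists_edgeCoord_pos hG hne
  have hzero : (0 : ℝ) ∈ uIcc (edgeCoord f a) (edgeCoord f b) := by
    simpa only [← point_zero_eq hf, edgeCoord_self hG.isAcyclic, Icc.coe_zero] using hy f
  have hnear : ∀ᶠ t in 𝓝[>] (0 : I), point f t ∈ C := by
    have hpos' : (0 : I) < ⟨edgeCoord f a, edgeCoord_mem_Icc f a⟩ := hpos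
    filter_upwards [Ioo_mem_nhdsGT hpos'] with t ht
    exact point_mem_of_isPreconnected hG.isAcyclic ha hb hC' ⟨ht.1, ht.2.trans_le le_one'⟩
      (uIcc_subset_uIcc hzero left_mem_uIcc
        (Icc_subset_uIcc ⟨Subtype.coe_le_coe.2 ht.1.le, Subtype.coe_le_coe.2 ht.2.le⟩))
  have : (𝓝[>] (0 : I)).NeBot := nhdsGT_neBot_of_exists_gt ⟨1, zero_lt_one⟩
  rw [← point_zero_eq hf]
  exact hC.mem_of_tendsto ((continuous_point f).continuousAt.mono_left nhdsWithin_le_nhds) hnear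

/-- Two points are linearly joined if a path connects them within their coordinate interval. -/
def LinJoined (a b : TreeSpace G) : Prop := JoinedIn (coordInterval a b) a b

theorem LinJoined.symm (h : LinJoined a b) : LinJoined b a := by
  rw [LinJoined, coordInterval_comm]
  exact JoinedIn.symm h

theorem LinJoined.trans (hax : LinJoined a x) (hxb : LinJoined x b) (hx : x ∈ coordInterval a b) :
    LinJoined a b :=
  (JoinedIn.mono hax fun _ hy e => uIcc_subset_uIcc left_mem_uIcc (hx e) (hy e)).trans
    (JoinedIn.mono hxb fun _ hy e => uIcc_subset_uIcc (hx e) right_mem_uIcc (hy e))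

theorem linJoined_point (e : G.Dart) (s t : I) : LinJoined (point e s) (point e t) := by
  have hI : JoinedIn (uIcc s t) s t := by
    have hℝ : JoinedIn (uIcc (s : ℝ) t) s t :=
      JoinedIn.of_segment_subset (segment_eq_uIcc (s : ℝ) t).subset
    have hproj := hℝ.map (continuous_projIcc (h := zero_le_one))
    rw [projIcc_val, projIcc_val] at hproj
    refine hproj.mono ((monotone_projIcc _).mapsTo_uIcc.image_subset.trans ?_)
    rw [projIcc_val, projIcc_val]
  refine (hI.map (continuous_point e)).mono ?_
  rintro _ ⟨r, hr, rfl⟩ f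
  exact edgeCoord_point_mem_uIcc f e hr

theorem LinJoined.point_of_edgeCoord_eq_zero (hG : G.IsTree) (h : LinJoined a (point f 0))
    (ha : edgeCoord f a = 0) (t : I) : LinJoined a (point f t) := by
  refine h.trans (linJoined_point f 0 t) fun e => ?_
  by_cases hedge : f.edge = e.edge
  · have hf : edgeCoord f (point f 0) = edgeCoord f a := by
      rw [ha, edgeCoord_self hG.isAcyclic, Icc.coe_zero]
    rcases (SimpleGraph.dart_edge_eq_iff e f).1 hedge.symm with rfl | rfl
    · exact hf ▸ left_mem_uIcc
    · rw [edgeCoord_symm hG, edgeCoord_symm hG, edgeCoord_symm hG, hf]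
      exact left_mem_uIcc
  · rw [edgeCoord_of_edge_ne hedge]
    exact right_mem_uIcc

theorem linJoined_of_walk (hG : G.IsTree) (p : G.Walk u v) (hp : p.IsPath) :
    ∀ e f : G.Dart, e.fst = u → f.fst = v → LinJoined (point e 0) (point f 0) := by
  induction p with
  | nil =>
    intro e f he hf
    rw [point_zero_eq (he.trans hf.symm)]
    exact JoinedIn.refl (left_mem_coordInterval _ _)
  | @cons u w v huw p ih =>
    intro e f he hf
    obtain ⟨hp, hu⟩ := (SimpleGraph.Walk.cons_isPath_iff huw p).1 hp
    let g : G.Dart := ⟨(u, w), huw⟩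
    have hfg : edgeCoord g.symm (point f 0) = 0 := edgeCoord_zero_of_notMem fun h =>
      (mem_farSide_symm hG).1 h (hf ▸ mem_farSide_of_walk g p hu)
    have hjoin := (ih hp g.symm f rfl hf).symm.point_of_edgeCoord_eq_zero hG hfg 1
    rw [point_one, SimpleGraph.Dart.symm_symm, point_zero_eq (e := g) (f := e) he.symm] at hjoin
    exact hjoin.symm

theorem linJoined_of_forall_vertex (hG : G.IsTree) (ha : ∀ e : G.Dart, LinJoined a (point e 0))
    (b : TreeSpace G) : LinJoined a b := by
  obtain ⟨f, t, rfl⟩ := exists_point b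
  let s : I := ⟨edgeCoord f a, edgeCoord_mem_Icc f a⟩
  rcases eq_or_ne s 0 with h₀ | h₀
  · exact (ha f).point_of_edgeCoord_eq_zero hG (congrArg Subtype.val h₀) t
  rcases eq_or_ne s 1 with h₁ | h₁
  · have hsymm : edgeCoord f.symm a = 0 := by
      rw [edgeCoord_symm hG, sub_eq_zero]
      exact (congrArg Subtype.val h₁).symm
    simpa only [point_symm, symm_symm] using
      (ha f.symm).point_of_edgeCoord_eq_zero hG hsymm (σ t)
  · rw [eq_point_of_edgeCoord_eq (t := s) hG.isAcyclic
      ⟨unitInterval.pos_iff_ne_zero.2 h₀, unitInterval.lt_one_iff_ne_one.2 h₁⟩ rfl]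
    exact linJoined_point f s t

theorem linJoined (hG : G.IsTree) (a b : TreeSpace G) : LinJoined a b := by
  have hvertex (e f : G.Dart) : LinJoined (point e 0) (point f 0) := by
    obtain ⟨p, hp⟩ := hG.connected.exists_isPath e.fst f.fst
    exact linJoined_of_walk hG p hp e f rfl rfl
  exact linJoined_of_forall_vertex hG
    (fun e => (linJoined_of_forall_vertex hG (hvertex e) a).symm) b

theorem hullSegment_eq_coordInterval (hG : G.IsTree) (a b : TreeSpace G) :
    hullSegment a b = coordInterval a b := by
  have := t2Space hG
  exact (hullSegment_subset_of_joinedIn (linJoined hG a b)).antisymm <|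
    subset_sInter fun C ⟨hab, hC, hC'⟩ =>
      coordInterval_subset hG (hab (by simp)) (hab (by simp)) hC hC'

end CoordInterval

instance : LocallyPathConnectedSpace (TreeSpace G) := by
  have : LocallyPathConnectedSpace I := (convex_Icc 0 1).locallyPathConnectedSpace
  exact isQuotientMap_quot_mk.locallyPathConnectedSpace

theorem isDendritic (hG : G.IsTree) : IsDendritic (TreeSpace G) where
  toT2Space := t2Space hG
  joinedIn_hullSegment a b := hullSegment_eq_coordInterval hG a b ▸ linJoined hG a b
  eq_of_mem_of_mem hy ha := by
    rw [hullSegment_eq_coordInterval hG] at hy ha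
    exact eq_of_mem_coordInterval hG hy ha

theorem point_zero_mem_hullSegment (hG : G.IsTree) (hef : e.fst = f.fst) (hne : e ≠ f) :
    point e 0 ∈ hullSegment (point e 1) (point f 1) := by
  rw [hullSegment_eq_coordInterval hG]
  intro g
  by_cases heg : e.edge = g.edge
  · have hfg : f.edge ≠ g.edge := by
      intro h
      rcases (SimpleGraph.dart_edge_eq_iff e f).1 (heg.trans h.symm) with rfl | rfl
      exacts [hne rfl, f.adj.ne hef.symm]
    rw [point_zero_eq hef, ← edgeCoord_of_edge_ne hfg 1]
    exact right_mem_uIcc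
  · rw [← edgeCoord_of_edge_ne heg 1]
    exact left_mem_uIcc

theorem exists_isBranchPoint (hG : G.IsTree) (hv : 3 ≤ (G.neighborSet v).encard) :
    ∃ b : TreeSpace G, IsBranchPoint b := by
  obtain ⟨t, htv, ht⟩ := exists_subset_encard_eq hv
  obtain ⟨p, q, r, hpq, hpr, hqr, rfl⟩ := encard_eq_three.1 ht
  let e (w : V) (hw : w ∈ G.neighborSet v) : G.Dart := ⟨(v, w), hw⟩
  have hends {w : V} (hw : w ∈ G.neighborSet v) {f : G.Dart} (hf : f.fst = v) :
      point (e w hw) 1 ≠ point f 0 := by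
    intro h
    have hcoord := congrArg (edgeCoord (e w hw)) h
    rw [← point_zero_eq (e := e w hw) hf.symm, edgeCoord_self hG.isAcyclic,
      edgeCoord_self hG.isAcyclic] at hcoord
    exact one_ne_zero hcoord
  have hbetween {w w' : V} (hw : w ∈ G.neighborSet v) (hw' : w' ∈ G.neighborSet v) (h : w ≠ w') :
      point (e w hw) 0 ∈ hullSegment (point (e w hw) 1) (point (e w' hw') 1) :=
    point_zero_mem_hullSegment hG rfl fun hee => h (congrArg (fun e => e.snd) hee)
  have hp := htv (mem_insert p _)
  have hq := htv (mem_insert_of_mem p (mem_insert q _))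
  have hr := htv (mem_insert_of_mem p (mem_insert_of_mem q rfl))
  have hpq₀ : point (e p hp) 0 = point (e q hq) 0 := point_zero_eq rfl
  exact ⟨point (e p hp) 0, point (e p hp) 1, point (e q hq) 1, point (e r hr) 1,
    hends hp rfl, hends hq rfl, hends hr rfl,
    hbetween hp hq hpq, hbetween hp hr hpr, hpq₀ ▸ hbetween hq hr hqr⟩

end TreeSpace

namespace MergeTreeData

variable {d : MergeTreeData} {u v w : Fin d.n}

/-- The set of children of a node. -/
def children (d : MergeTreeData) (v : Fin d.n) : Set (Fin d.n) := {w | d.parent w = v ∧ w ≠ v}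

/-- The set of leaves below a node, through which the merge tree becomes a family of subsets of
its leaves. -/
def leavesBelow (d : MergeTreeData) (v : Fin d.n) : Set d.Leaf := {l | d.Desc l.1 v}

theorem Desc.trans (huv : d.Desc u v) (hvw : d.Desc v w) : d.Desc u w := by
  obtain ⟨k, rfl⟩ := huv
  obtain ⟨m, rfl⟩ := hvw
  exact ⟨m + k, iterate_add_apply d.parent m k u⟩

theorem Desc.comparable (huv : d.Desc u v) (huw : d.Desc u w) : d.Desc v w ∨ d.Desc w v := by
  have hle {k m : ℕ} (hkm : k ≤ m) : d.Desc (d.parent^[k] u) (d.parent^[m] u) :=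
    ⟨m - k, by rw [← iterate_add_apply, Nat.sub_add_cancel hkm]⟩
  obtain ⟨k, rfl⟩ := huv
  obtain ⟨m, rfl⟩ := huw
  exact (le_total k m).imp hle hle

theorem Desc.exists_mem_children (h : d.Desc v w) (hne : v ≠ w) :
    ∃ u ∈ d.children w, d.Desc v u := by
  obtain ⟨k, hk⟩ := h
  induction k with
  | zero => exact absurd hk hne
  | succ k ih =>
    by_cases hw : d.parent^[k] v = w
    · exact ih hw
    · rw [iterate_succ_apply'] at hk
      exact ⟨_, ⟨hk, hw⟩, k, rfl⟩

theorem IsLeafNode.eq_of_desc (hw : d.IsLeafNode w) (h : d.Desc v w) : v = w := by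
  by_contra hne
  obtain ⟨u, hu, -⟩ := h.exists_mem_children hne
  exact hu.2 (hw u hu.1)

theorem val_lt_of_mem_children (h : w ∈ d.children v) : d.val w < d.val v := by
  obtain ⟨rfl, hne⟩ := h
  exact d.hval w fun hw => hne (hw ▸ d.hroot.symm)

theorem leavesBelow_subset (h : d.Desc v w) : d.leavesBelow v ⊆ d.leavesBelow w := fun _ hl =>
  hl.trans h

theorem leavesBelow_leaf (l : d.Leaf) : d.leavesBelow l.1 = {l} :=
  Subset.antisymm (fun _ hl => Subtype.ext (l.2.eq_of_desc hl)) (singleton_subset_iff.2 ⟨0, rfl⟩)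

theorem leavesBelow_root (d : MergeTreeData) : d.leavesBelow d.root = univ :=
  eq_univ_of_forall fun l => d.hreach l.1

theorem disjoint_leavesBelow_or (v w : Fin d.n) :
    Disjoint (d.leavesBelow v) (d.leavesBelow w) ∨ d.Desc v w ∨ d.Desc w v := by
  refine or_iff_not_imp_left.2 fun h => ?_
  obtain ⟨l, hv, hw⟩ := not_disjoint_iff.1 h
  exact Desc.comparable hv hw

instance : Finite d.Leaf := inferInstanceAs (Finite {v : Fin d.n // d.IsLeafNode v})

theorem ncard_leavesBelow_inter_le {S : Set d.Leaf} (hv : (d.leavesBelow v ∩ S).Nontrivial)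
    (hchild : ∀ w ∈ d.children v, (d.leavesBelow w ∩ S).Subsingleton) :
    (d.leavesBelow v ∩ S).ncard ≤ (d.children v).ncard := by
  have hne (l : d.Leaf) : l.1 ≠ v := by
    rintro rfl
    rw [leavesBelow_leaf] at hv
    exact not_nontrivial_singleton (hv.mono inter_subset_left)
  have hex (l : d.Leaf) (hl : l ∈ d.leavesBelow v ∩ S) : ∃ w ∈ d.children v, l ∈ d.leavesBelow w :=
    hl.1.exists_mem_children (hne l)
  have : Nonempty (Fin d.n) := ⟨v⟩
  choose! child hmem hbelow using hex
  refine ncard_le_ncard_of_injOn child hmem ?_ (toFinite _)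
  exact fun l hl l' hl' h => hchild _ (hmem l hl) ⟨hbelow l hl, hl.2⟩ ⟨h ▸ hbelow l' hl', hl'.2⟩

theorem isBinaryHierarchy_range_leavesBelow (hbin : ∀ v, (d.children v).ncard ≤ 2) :
    IsBinaryHierarchy (range d.leavesBelow) where
  laminar := by
    rintro _ ⟨v, rfl⟩ _ ⟨w, rfl⟩
    exact (disjoint_leavesBelow_or v w).imp_right (Or.imp leavesBelow_subset leavesBelow_subset)
  singleton_mem l := ⟨l.1, leavesBelow_leaf l⟩
  exists_isCherry {S} hS := by
    have hroot : (d.leavesBelow d.root ∩ S).Nontrivial := by rwa [leavesBelow_root, univ_inter]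
    obtain ⟨v, hv, hmin⟩ := exists_min_image {v | (d.leavesBelow v ∩ S).Nontrivial} d.val
      (toFinite _) ⟨d.root, hroot⟩
    have hcard := ncard_leavesBelow_inter_le hv fun w hw =>
      not_nontrivial_iff.1 fun h => (hmin w h).not_gt (val_lt_of_mem_children hw)
    obtain ⟨l₁, h₁, l₂, h₂, hne⟩ := hv
    have hpair : {l₁, l₂} = d.leavesBelow v ∩ S :=
      eq_of_subset_of_ncard_le (pair_subset h₁ h₂)
        (by rw [ncard_pair hne]; exact hcard.trans (hbin v)) (toFinite _)
    exact ⟨l₁, l₂, hne, d.leavesBelow v, ⟨v, rfl⟩, hpair.symm⟩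

theorem hullOf_singleton {X : Type*} [TopologicalSpace X] (x : d.Leaf → X) (v : Fin d.n) :
    hullOf d (fun l => {x l}) v = ConvH (x '' d.leavesBelow v) := by
  rw [hullOf, image_eq_iUnion]
  congr 1
  refine iUnion_congr fun l => ?_
  by_cases h : d.Desc l.1 v <;> simp [leavesBelow, h]

theorem confCond_iff {X : Type*} [TopologicalSpace X] (hbin : ∀ v, (d.children v).ncard ≤ 2)
    {x : d.Leaf → X} : ConfCond d x ↔ x ∈ compatConf (range d.leavesBelow) univ := by
  have hdisj (v w : Fin d.n) : Disjoint (hullOf d (fun l => {x l}) v) (hullOf d (fun l => {x l}) w)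
      ↔ Disjoint (ConvH (x '' (d.leavesBelow v ∩ univ)))
        (ConvH (x '' (d.leavesBelow w ∩ univ))) := by
    rw [hullOf_singleton, hullOf_singleton, inter_univ, inter_univ]
  constructor
  · rintro ⟨-, hx⟩ _ ⟨v, rfl⟩ _ ⟨w, rfl⟩ hvw
    by_contra h
    rcases hx v w (not_disjoint_iff_nonempty_inter.1 (h ∘ (hdisj v w).1)) with hle | hle
    · have hempty := hvw.eq_bot_of_le (leavesBelow_subset hle)
      simp [hempty, convH_empty] at h
    · have hempty := hvw.symm.eq_bot_of_le (leavesBelow_subset hle)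
      simp [hempty, convH_empty] at h
  · intro hx
    refine ⟨fun l l' hll' => ?_, fun v w hvw => (disjoint_leavesBelow_or v w).resolve_left ?_⟩
    · by_contra hne
      exact (isBinaryHierarchy_range_leavesBelow hbin).ne_of_mem_compatConf hx trivial trivial hne
        hll'
    · exact fun h => not_disjoint_iff_nonempty_inter.2 hvw
        ((hdisj v w).2 (hx _ ⟨v, rfl⟩ _ ⟨w, rfl⟩ h))

end MergeTreeData

theorem stmt17_general {V : Type*} {G : SimpleGraph V} (hG : G.IsTree)
    (hbranch : ∃ v, 3 ≤ (G.neighborSet v).encard) (d : MergeTreeData)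
    (hbin : ∀ v, (d.children v).ncard ≤ 2) :
    IsPathConnected {x : d.Leaf → TreeSpace G | ConfCond d x} := by
  obtain ⟨v, hv⟩ := hbranch
  obtain ⟨b, hb⟩ := TreeSpace.exists_isBranchPoint hG hv
  have := TreeSpace.isDendritic hG
  simp only [MergeTreeData.confCond_iff hbin]
  exact isPathConnected_compatConf (MergeTreeData.isBinaryHierarchy_range_leavesBelow hbin) hb univ

/-- For a geometric tree `X` with a branch point (a vertex of degree at least 3) and a
generic cellular merge tree `T`, the constrained configuration space `Conf(X,T)` is
nonempty and path-connected. -/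
theorem stmt17 {V : Type} [Fintype V] (G : SimpleGraph V)
    (hconn : G.Connected) (hacyc : G.IsAcyclic)
    (hbranch : ∃ v : V, 3 ≤ Nat.card ↥(G.neighborSet v))
    (d : MergeTreeData) (hgen : d.Generic) :
    {x : d.Leaf → TreeSpace G | ConfCond d x}.Nonempty ∧
    IsPathConnected {x : d.Leaf → TreeSpace G | ConfCond d x} := by
  obtain ⟨v, hv⟩ := hbranch
  have hv' : 3 ≤ (G.neighborSet v).encard := by
    rw [← (toFinite (G.neighborSet v)).cast_ncard_eq]
    exact_mod_cast hv
  have h := stmt17_general ⟨hconn, hacyc⟩ ⟨v, hv'⟩ d fun v =>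
    (hgen.1 v).elim (fun h => h.trans_le zero_le_two) fun h => h.le
  exact ⟨h.nonempty, h⟩
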